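/- Let V₁ and W be finite-dimensional real vector spaces, where W carries a nondegenerate symmetric bilinear form of type (r, t) with r ≤ 5. Let σ : V₁ × V₁ → W be a nonzero flat symmetric bilinear map. If dim N(σ) < dim V₁ − (r + t), then S(σ) is a degenerate subspace of W. -/

import Mathlib

open Module Submodule

/-- A nondegenerate symmetric bilinear form `B` on `W` has type `(r, t)` if `W` has an
orthogonal basis consisting of `r` vectors of negative square length and `t` vectors of
positive square length. -/
def BilinFormHasType {W : Type*} [AddCommGroup W] [Module ℝ W]
    (B : LinearMap.BilinForm ℝ W) (r t : ℕ) : Prop :=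
  ∃ b : Basis (Fin r ⊕ Fin t) ℝ W,
    (∀ i j, i ≠ j → B (b i) (b j) = 0) ∧
    (∀ i, B (b (Sum.inl i)) (b (Sum.inl i)) < 0) ∧
    (∀ j, 0 < B (b (Sum.inr j)) (b (Sum.inr j)))

/-!
Suppose `S(σ)` is nondegenerate and let `X` be regular, that is, `σ(X, ·)` has maximal rank. By
Moore's lemma and flatness, `σ(n, Z)` lies in the isotropic space `R(X)`, the radical of the range
of `σ(X, ·)`, whenever `σ(X, n) = 0`. On the other hand, if `φ` is symmetric bilinear and every
`φ(Y, ·)` has rank at most `c`, then the values of `φ` span a space of dimension at most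
`(c + 1).choose 2`. Applied to the pairing of `σ` with a subspace `U` of `S(σ)`, whose values span
the whole dual of `U`, it gives `dim U ≤ (c + 1).choose 2`, where `c` is the codimension in `U` of
the vectors orthogonal to the range of `σ(Y, ·)` for generic `Y`.

Let `dim R(X)` be minimal. Isotropic subspaces have dimension at most `5`, and counting dimensions
with these bounds and the assumption on `N(σ)` leaves only `dim R(X) = 3`, with `R(X)` and `R(Y)`
orthogonal and spanning a maximal isotropic space `I` of dimension `5` for generic `Y`. For generic
`Z` the space `R(Z)` is orthogonal to `I`, hence contained in it; it is also orthogonal to the range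
of `σ(Z, ·)`, so the bound with `U = I` and `c = 2` reads `5 ≤ 3`.
-/

namespace FlatBilinear

open LinearMap (range ker)

section GenericPoints

variable {K V A E : Type*} [Field K] [AddCommGroup V] [Module K V] [AddCommGroup A] [Module K A]
  [AddCommGroup E] [Module K E]

lemma exists_comp_comp_eq_id (L : A →ₗ[K] E) :
    ∃ (s : range L →ₗ[K] A) (p : E →ₗ[K] range L), p ∘ₗ L ∘ₗ s = LinearMap.id := by
  obtain ⟨s, hs⟩ := L.rangeRestrict.exists_rightInverse_of_surjective L.range_rangeRestrict
  obtain ⟨p, hp⟩ := (range L).subtype.exists_leftInverse_of_injective (ker_subtype _)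
  refine ⟨s, p, ?_⟩
  calc p ∘ₗ L ∘ₗ s = (p ∘ₗ (range L).subtype) ∘ₗ L.rangeRestrict ∘ₗ s := rfl
    _ = LinearMap.id := by rw [hp, hs, LinearMap.id_comp]

lemma finite_setOf_finrank_range_add_smul_lt [FiniteDimensional K E] (L₀ L₁ : A →ₗ[K] E) :
    {t : K | finrank K (range (L₀ + t • L₁)) < finrank K (range L₀)}.Finite := by
  obtain ⟨s, p, hsp⟩ := exists_comp_comp_eq_id L₀
  let M : End K (range L₀) := p ∘ₗ L₁ ∘ₗ s
  have hM (t : K) (v : range L₀) : p ((L₀ + t • L₁) (s v)) = v + t • M v := by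
    simpa [M] using LinearMap.congr_fun hsp v
  have hinj : Set.InjOn (fun t : K => -t⁻¹) ((fun t : K => -t⁻¹) ⁻¹' {μ | M.HasEigenvalue μ}) :=
    (neg_injective.comp inv_injective).injOn
  refine (M.finite_hasEigenvalue.preimage hinj).subset fun t ht => ?_
  contrapose! ht
  have hker : Function.Injective ((L₀ + t • L₁) ∘ₗ s) := by
    refine (injective_iff_map_eq_zero _).2 fun v hv => ?_
    have hv' : v + t • M v = 0 := by rw [← hM]; exact (congrArg p hv).trans p.map_zero
    by_contra hv0
    have ht0 : t ≠ 0 := by rintro rfl; simp [hv0] at hv'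
    refine ht (End.hasEigenvalue_of_hasEigenvector (x := v) ⟨End.mem_eigenspace_iff.2 ?_, hv0⟩)
    rw [eq_neg_of_add_eq_zero_left hv', smul_neg, neg_smul, neg_neg, smul_smul,
      inv_mul_cancel₀ ht0, one_smul, ← eq_neg_of_add_eq_zero_left hv']
  rw [Set.mem_ofPred_eq, not_lt, ← LinearMap.finrank_range_of_inj hker]
  exact finrank_mono (LinearMap.range_comp_le_range _ _)

/-- Moore's lemma. For `t ≠ 0` the vector `L₁ n` lies in the range of `L₀ + t • L₁`, so adjoining
it to the range of `L₀` would raise the generic rank. -/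
lemma apply_mem_range_of_finrank_range_add_smul_le [Infinite K] [FiniteDimensional K E]
    {L₀ L₁ : A →ₗ[K] E}
    (h : ∀ t : K, finrank K (range (L₀ + t • L₁)) ≤ finrank K (range L₀))
    {n : A} (hn : L₀ n = 0) : L₁ n ∈ range L₀ := by
  by_contra hne
  let M₀ : A × K →ₗ[K] E := L₀.coprod (LinearMap.toSpanSingleton K E (L₁ n))
  let M₁ : A × K →ₗ[K] E := L₁.coprod 0
  obtain ⟨t, ht⟩ := ((finite_setOf_finrank_range_add_smul_lt M₀ M₁).union
    (Set.finite_singleton 0)).infinite_compl.nonempty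
  obtain ⟨ht0, hrank⟩ :
      t ≠ 0 ∧ finrank K (range M₀) ≤ finrank K (range (M₀ + t • M₁)) := by
    simpa using ht
  have hle : range (M₀ + t • M₁) ≤ range (L₀ + t • L₁) := by
    rintro _ ⟨⟨a, c⟩, rfl⟩
    refine ⟨a + (c * t⁻¹) • n, ?_⟩
    have hc : c * t⁻¹ * t = c := inv_mul_cancel_right₀ ht0 c
    simp only [LinearMap.add_apply, LinearMap.smul_apply, map_add, map_smul, hn, smul_zero,
      add_zero, smul_add, smul_smul, hc, M₀, M₁, LinearMap.coprod_apply,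
      LinearMap.toSpanSingleton_apply, LinearMap.zero_apply]
    abel
  have hlt : range L₀ < range M₀ := by
    refine SetLike.lt_iff_le_and_exists.2 ⟨?_, L₁ n, ⟨(0, 1), by simp [M₀]⟩, hne⟩
    rintro _ ⟨a, rfl⟩
    exact ⟨(a, 0), by simp [M₀]⟩
  exact (((finrank_lt_finrank_of_lt hlt).trans_le hrank).trans_le (finrank_mono hle)).not_ge (h t)

/-- A property of vectors is generic if it holds somewhere and, along every line through a point
where it holds, it fails at finitely many points only. Over an infinite field this stands in for
holding on a nonempty Zariski open set. -/
def IsGeneric (K : Type*) [Field K] {V : Type*} [AddCommGroup V] [Module K V]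
    (P : V → Prop) : Prop :=
  (∃ x, P x) ∧ ∀ x y, P x → {t : K | ¬ P (x + t • y)}.Finite

lemma IsGeneric.and [Infinite K] {P Q : V → Prop} (hP : IsGeneric K P) (hQ : IsGeneric K Q) :
    IsGeneric K fun x => P x ∧ Q x := by
  obtain ⟨⟨x, hx⟩, hPline⟩ := hP
  obtain ⟨⟨y, hy⟩, hQline⟩ := hQ
  refine ⟨?_, fun u v huv => ?_⟩
  · have hQfin : ((1 - ·) ⁻¹' {t : K | ¬ Q (y + t • (x - y))}).Finite :=
      (hQline y (x - y) hy).preimage sub_right_injective.injOn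
    obtain ⟨t, ht⟩ := ((hPline x (y - x) hx).union hQfin).infinite_compl.nonempty
    obtain ⟨hPt, hQt⟩ : P (x + t • (y - x)) ∧ Q (y + (1 - t) • (x - y)) := by simpa using ht
    have hline : y + (1 - t) • (x - y) = x + t • (y - x) := by module
    exact ⟨_, hPt, hline ▸ hQt⟩
  · refine ((hPline u v huv.1).union (hQline u v huv.2)).subset fun t ht => ?_
    exact not_and_or.1 ht

/-- `X` is a regular element of `σ` if the linear map `σ X` has the largest rank among all the
`σ Y`. -/
def IsRegularElement (σ : V →ₗ[K] A →ₗ[K] E) (X : V) : Prop :=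
  ∀ Y, finrank K (range (σ Y)) ≤ finrank K (range (σ X))

lemma isGeneric_isRegularElement [FiniteDimensional K E] (σ : V →ₗ[K] A →ₗ[K] E) :
    IsGeneric K (IsRegularElement σ) := by
  refine ⟨?_, fun X Y hX => ?_⟩
  · have hbdd : BddAbove (Set.range fun Y => finrank K (range (σ Y))) :=
      ⟨finrank K E, Set.forall_mem_range.2 fun Y => finrank_le _⟩
    obtain ⟨X, hX⟩ := Nat.sSup_mem (Set.range_nonempty _) hbdd
    exact ⟨X, fun Y => (le_csSup hbdd ⟨Y, rfl⟩).trans_eq hX.symm⟩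
  · refine (finite_setOf_finrank_range_add_smul_lt (σ X) (σ Y)).subset fun t ht => ?_
    contrapose! ht
    refine not_not.2 fun Z => (hX Z).trans ?_
    rw [map_add, map_smul]
    exact not_lt.1 ht

lemma finite_setOf_add_smul_add_sq_smul_eq_zero {a : E} (ha : a ≠ 0) (b c : E) :
    {t : K | a + t • b + t ^ 2 • c = 0}.Finite := by
  obtain ⟨ξ, hξ⟩ : ∃ ξ : Dual K E, ξ a ≠ 0 := by
    contrapose! ha
    exact (forall_dual_apply_eq_zero_iff K a).1 ha
  let q : Polynomial K := .C (ξ a) + .C (ξ b) * .X + .C (ξ c) * .X ^ 2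
  have hq : q ≠ 0 := fun h => hξ <| by simpa [q] using congrArg (Polynomial.eval 0) h
  refine (Polynomial.finite_setOfPred_isRoot hq).subset fun t ht => ?_
  have hroot : ξ a + t * ξ b + t ^ 2 * ξ c = 0 := by simpa using congrArg ξ ht
  calc q.eval t = ξ a + ξ b * t + ξ c * t ^ 2 := by simp [q]
    _ = 0 := by rw [← hroot]; ring

lemma isGeneric_apply_self_ne_zero {φ : V →ₗ[K] V →ₗ[K] E} (h : ∃ X, φ X X ≠ 0) :
    IsGeneric K fun X => φ X X ≠ 0 := by
  refine ⟨h, fun X Y hX => ?_⟩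
  convert finite_setOf_add_smul_add_sq_smul_eq_zero (K := K) hX (φ X Y + φ Y X) (φ Y Y) using 3
    with t
  simp only [ne_eq, not_not, map_add, map_smul, LinearMap.add_apply, LinearMap.smul_apply]
  constructor <;> intro h <;> rw [← h] <;> module

end GenericPoints

section SpanOfValues

variable {K V E : Type*} [Field K] [AddCommGroup V] [Module K V] [AddCommGroup E] [Module K E]
  {φ : V →ₗ[K] V →ₗ[K] E}

lemma eq_zero_of_apply_self_eq_zero [NeZero (2 : K)] (hφ : ∀ X Y, φ X Y = φ Y X)
    (h : ∀ X, φ X X = 0) : φ = 0 := by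
  ext X Y
  have hpolar : (2 : K) • φ X Y = 0 := by
    simpa [h, hφ Y X, two_smul] using h (X + Y)
  exact (smul_eq_zero.1 hpolar).resolve_left two_ne_zero

lemma IsRegularElement.apply_mem_range [Infinite K] [FiniteDimensional K E] {X : V}
    (hX : IsRegularElement φ X) (hφ : ∀ X Y, φ X Y = φ Y X) {n : V} (hn : φ X n = 0) (Z : V) :
    φ n Z ∈ range (φ X) := by
  rw [hφ]
  refine apply_mem_range_of_finrank_range_add_smul_le (fun t => ?_) hn
  rw [← map_smul, ← map_add]
  exact hX _

lemma finrank_map₂_self_le_choose (hφ : ∀ X Y, φ X Y = φ Y X) (C : Submodule K V)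
    [FiniteDimensional K C] : finrank K (map₂ φ C C) ≤ (finrank K C + 1).choose 2 := by
  let b := finBasis K C
  let f : Sym2 (Fin (finrank K C)) → E := Sym2.lift ⟨fun i j => φ (b i) (b j), fun i j => hφ _ _⟩
  have hC : C = span K (Set.range fun i => (b i : V)) := by
    have := congrArg (Submodule.map C.subtype) b.span_eq
    rw [map_span, map_subtype_top, ← Set.range_comp] at this
    exact this.symm
  have hle : map₂ φ C C ≤ span K (Set.range f) := by
    nth_rw 1 2 [hC]
    rw [map₂_span_span]
    refine span_mono ?_
    rintro _ ⟨_, ⟨i, rfl⟩, _, ⟨j, rfl⟩, rfl⟩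
    exact ⟨s(i, j), rfl⟩
  have := FiniteDimensional.span_of_finite K (Set.finite_range f)
  calc finrank K (map₂ φ C C) ≤ finrank K (span K (Set.range f)) := finrank_mono hle
    _ ≤ Fintype.card (Sym2 (Fin (finrank K C))) := finrank_range_le_card f
    _ = (finrank K C + 1).choose 2 := by rw [Sym2.card, Fintype.card_fin]

variable [FiniteDimensional K V] [FiniteDimensional K E]

lemma IsRegularElement.finrank_map₂_le_choose_of_apply_self_ne_zero [Infinite K] {X : V}
    (hX : IsRegularElement φ X) (hφ : ∀ X Y, φ X Y = φ Y X) (hXX : φ X X ≠ 0) :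
    finrank K (map₂ φ ⊤ ⊤) ≤ (finrank K (range (φ X)) + 1).choose 2 := by
  set H := ker (φ X) ⊔ span K {X}
  have hH : map₂ φ H ⊤ ≤ range (φ X) := by
    rw [map₂_sup_left, sup_le_iff, map₂_span_singleton_eq_map, Submodule.map_top]
    exact ⟨map₂_le.2 fun n hn Z _ => hX.apply_mem_range hφ hn Z, le_rfl⟩
  obtain ⟨C, hC⟩ := H.exists_isCompl
  have hspan : map₂ φ ⊤ ⊤ ≤ range (φ X) ⊔ map₂ φ C C := by
    have hCH : map₂ φ C H ≤ map₂ φ H ⊤ :=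
      map₂_le.2 fun c _ h hh => hφ h c ▸ apply_mem_map₂ φ hh mem_top
    nth_rw 1 [← hC.sup_eq_top]
    rw [map₂_sup_left]
    refine sup_le (hH.trans le_sup_left) ?_
    rw [← hC.sup_eq_top, map₂_sup_right]
    exact sup_le_sup_right (hCH.trans hH) _
  have hker : finrank K (ker (φ X)) < finrank K H :=
    finrank_lt_finrank_of_lt <| SetLike.lt_iff_le_and_exists.2
      ⟨le_sup_left, X, mem_sup_right (mem_span_singleton_self X), hXX⟩
  have hcodim : finrank K C + 1 ≤ finrank K (range (φ X)) := by
    have hsum := finrank_add_eq_of_isCompl hC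
    have hrank := (φ X).finrank_range_add_finrank_ker
    omega
  calc finrank K (map₂ φ ⊤ ⊤) ≤ finrank K (range (φ X) ⊔ map₂ φ C C : Submodule K E) :=
        finrank_mono hspan
    _ ≤ finrank K (range (φ X)) + finrank K (map₂ φ C C) :=
        finrank_add_le_finrank_add_finrank _ _
    _ ≤ finrank K (range (φ X)) + (finrank K (range (φ X))).choose 2 := by
        gcongr
        exact (finrank_map₂_self_le_choose hφ C).trans (Nat.choose_le_choose 2 hcodim)
    _ = (finrank K (range (φ X)) + 1).choose 2 := by
        rw [Nat.choose_succ_succ', Nat.choose_one_right]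

lemma IsRegularElement.finrank_map₂_le_choose [Infinite K] [NeZero (2 : K)] {X : V}
    (hX : IsRegularElement φ X) (hφ : ∀ X Y, φ X Y = φ Y X) :
    finrank K (map₂ φ ⊤ ⊤) ≤ (finrank K (range (φ X)) + 1).choose 2 := by
  by_cases h : ∃ Y, φ Y Y ≠ 0
  · obtain ⟨⟨Y, hY, hYY⟩, -⟩ :=
      (isGeneric_isRegularElement φ).and (isGeneric_apply_self_ne_zero h)
    exact (hY.finrank_map₂_le_choose_of_apply_self_ne_zero hφ hYY).trans
      (Nat.choose_le_choose 2 (Nat.succ_le_succ (hX Y)))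
  · push Not at h
    have hbot : map₂ φ ⊤ ⊤ = ⊥ := by
      rw [eq_bot_iff, map₂_le, eq_zero_of_apply_self_eq_zero hφ h]
      simp
    rw [hbot, finrank_bot]
    exact Nat.zero_le _

end SpanOfValues

section Orthogonality

variable {K V W : Type*} [Field K] [AddCommGroup V] [Module K V] [AddCommGroup W] [Module K W]
  {B : LinearMap.BilinForm K W}

lemma finrank_map_add_finrank_inf_ker [FiniteDimensional K V] (f : V →ₗ[K] W)
    (N : Submodule K V) :
    finrank K (N.map f) + finrank K (N ⊓ ker f : Submodule K V) = finrank K N := by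
  rw [← (f.domRestrict N).finrank_range_add_finrank_ker, LinearMap.range_domRestrict,
    LinearMap.ker_domRestrict, ← finrank_map_subtype_eq N, map_comap_subtype]

lemma le_orthogonal_comm (hB : B.IsRefl) {I J : Submodule K W} :
    I ≤ B.orthogonal J ↔ J ≤ B.orthogonal I :=
  ⟨fun h _ hy _ hx => hB _ _ (h hx _ hy), fun h _ hx _ hy => hB _ _ (h hy _ hx)⟩

lemma orthogonal_sup (B : LinearMap.BilinForm K W) (I J : Submodule K W) :
    B.orthogonal (I ⊔ J) = B.orthogonal I ⊓ B.orthogonal J := by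
  refine le_antisymm (le_inf (LinearMap.BilinForm.orthogonal_le le_sup_left)
    (LinearMap.BilinForm.orthogonal_le le_sup_right)) fun w hw x hx => ?_
  obtain ⟨y, hy, z, hz, rfl⟩ := mem_sup.1 hx
  rw [map_add, LinearMap.add_apply, hw.1 y hy, hw.2 z hz, add_zero]

lemma sup_le_orthogonal_sup (hB : B.IsRefl) {I J : Submodule K W} (hI : I ≤ B.orthogonal I)
    (hJ : J ≤ B.orthogonal J) (hIJ : I ≤ B.orthogonal J) :
    I ⊔ J ≤ B.orthogonal (I ⊔ J) := by
  rw [orthogonal_sup]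
  exact sup_le (le_inf hI hIJ) (le_inf ((le_orthogonal_comm hB).1 hIJ) hJ)

lemma finrank_inf_orthogonal_add_finrank_le [FiniteDimensional K W] (hB : B.IsRefl)
    {L : Submodule K W} (hL : Disjoint L (B.orthogonal ⊤)) :
    finrank K (L ⊓ B.orthogonal L : Submodule K W) + finrank K L ≤ finrank K W := by
  have hbot : L ⊓ B.orthogonal L ⊓ B.orthogonal ⊤ = ⊥ := (hL.mono_left inf_le_left).eq_bot
  have hsum := LinearMap.BilinForm.finrank_add_finrank_orthogonal hB (L ⊓ B.orthogonal L)
  have hle : L ≤ B.orthogonal (L ⊓ B.orthogonal L) := (le_orthogonal_comm hB).1 inf_le_right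
  rw [hbot, finrank_bot, add_zero] at hsum
  exact (Nat.add_le_add_left (finrank_mono hle) _).trans_eq hsum

end Orthogonality

section Pairing

variable {K V W : Type*} [Field K] [AddCommGroup V] [Module K V] [AddCommGroup W] [Module K W]

lemma finrank_map_domRestrict₂_add (B : LinearMap.BilinForm K W) (U L : Submodule K W)
    [FiniteDimensional K U] :
    finrank K (L.map (B.domRestrict₂ U)) + finrank K (U ⊓ B.orthogonal L : Submodule K W) =
      finrank K U := by
  have hann : (L.map (B.domRestrict₂ U)).dualCoannihilator.map U.subtype =
      U ⊓ B.orthogonal L := by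
    ext w
    simp [mem_dualCoannihilator, LinearMap.BilinForm.mem_orthogonal_iff,
      LinearMap.domRestrict₂_apply, and_comm]
  rw [← hann, finrank_map_subtype_eq]
  exact Subspace.finrank_add_finrank_dualCoannihilator_eq _

/-- The bilinear map `(X, Y) ↦ ⟨σ(X, Y), ·⟩` with values in the dual of a subspace `U` of `W`. Its
rank at `Y` is the codimension in `U` of the vectors orthogonal to the range of `σ Y`. -/
def pairing (B : LinearMap.BilinForm K W) (U : Submodule K W) (σ : V →ₗ[K] V →ₗ[K] W) :
    V →ₗ[K] V →ₗ[K] Dual K U :=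
  σ.compr₂ (B.domRestrict₂ U)

variable {B : LinearMap.BilinForm K W} {U : Submodule K W} [FiniteDimensional K U]
  {σ : V →ₗ[K] V →ₗ[K] W}

lemma finrank_range_pairing_add (Y : V) :
    finrank K (range (pairing B U σ Y)) +
      finrank K (U ⊓ B.orthogonal (range (σ Y)) : Submodule K W) = finrank K U := by
  rw [← finrank_map_domRestrict₂_add B U (range (σ Y)), ← LinearMap.range_comp]
  rfl

lemma finrank_map₂_pairing (hU : Disjoint U (B.orthogonal (map₂ σ ⊤ ⊤))) :
    finrank K (map₂ (pairing B U σ) ⊤ ⊤) = finrank K U := by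
  rw [← finrank_map_domRestrict₂_add B U (map₂ σ ⊤ ⊤), hU.eq_bot, finrank_bot, add_zero, map_map₂]
  rfl

variable [Infinite K] [NeZero (2 : K)] [FiniteDimensional K V]

lemma finrank_le_choose_of_isRegularElement_pairing (hσ : ∀ X Y, σ X Y = σ Y X)
    (hU : Disjoint U (B.orthogonal (map₂ σ ⊤ ⊤))) {Y : V}
    (hY : IsRegularElement (pairing B U σ) Y) {c : ℕ}
    (hc : finrank K U ≤ finrank K (U ⊓ B.orthogonal (range (σ Y)) : Submodule K W) + c) :
    finrank K U ≤ (c + 1).choose 2 := by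
  have hsymm : ∀ X Z, pairing B U σ X Z = pairing B U σ Z X := fun X Z =>
    congrArg (B.domRestrict₂ U) (hσ X Z)
  have hrank : finrank K (range (pairing B U σ Y)) ≤ c := by
    have := finrank_range_pairing_add (B := B) (U := U) (σ := σ) Y
    omega
  rw [← finrank_map₂_pairing hU]
  exact (hY.finrank_map₂_le_choose hsymm).trans (Nat.choose_le_choose 2 (Nat.succ_le_succ hrank))

lemma exists_inf_orthogonal_range_eq_bot (hσ : ∀ X Y, σ X Y = σ Y X)
    (hU : Disjoint U (B.orthogonal (map₂ σ ⊤ ⊤))) (hU2 : finrank K U ≤ 2) :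
    ∃ Y, U ⊓ B.orthogonal (range (σ Y)) = ⊥ := by
  obtain ⟨Y, hY⟩ := (isGeneric_isRegularElement (pairing B U σ)).1
  refine ⟨Y, ?_⟩
  have hfd := finiteDimensional_inf_left U (B.orthogonal (range (σ Y)))
  have hchoose₀ : finrank K U ≤ finrank K (U ⊓ B.orthogonal (range (σ Y)) : Submodule K W) + 0 →
      finrank K U ≤ 0 := finrank_le_choose_of_isRegularElement_pairing hσ hU hY
  have hchoose₁ : finrank K U ≤ finrank K (U ⊓ B.orthogonal (range (σ Y)) : Submodule K W) + 1 →
      finrank K U ≤ 1 := finrank_le_choose_of_isRegularElement_pairing hσ hU hY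
  have hle : finrank K (U ⊓ B.orthogonal (range (σ Y)) : Submodule K W) ≤ finrank K U :=
    finrank_mono inf_le_left
  exact finrank_eq_zero.1 (by omega)

end Pairing

section FlatBilinearMaps

variable {K V W : Type*} [Field K] [AddCommGroup V] [Module K V] [AddCommGroup W] [Module K W]

/-- A symmetric bilinear map `σ : V × V → W` that is flat with respect to the bilinear form `B`
on `W`. -/
structure IsFlatSymm (B : LinearMap.BilinForm K W) (σ : V →ₗ[K] V →ₗ[K] W) : Prop where
  symm : ∀ X Y, σ X Y = σ Y X
  flat : ∀ X Y Z U, B (σ X Y) (σ Z U) = B (σ X U) (σ Y Z)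

/-- The radical of the restriction of `B` to the range of `σ X`. -/
def rangeRadical (B : LinearMap.BilinForm K W) (σ : V →ₗ[K] V →ₗ[K] W) (X : V) :
    Submodule K W :=
  range (σ X) ⊓ B.orthogonal (range (σ X))

/-- A regular element `X` whose radical `rangeRadical B σ X` has the smallest dimension among those
of all regular elements. -/
def IsMinimalRegularElement (B : LinearMap.BilinForm K W) (σ : V →ₗ[K] V →ₗ[K] W) (X : V) : Prop :=
  MinimalFor (IsRegularElement σ) (fun Y => finrank K (rangeRadical B σ Y)) X

variable {B : LinearMap.BilinForm K W} {σ : V →ₗ[K] V →ₗ[K] W} {X Y : V}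

lemma rangeRadical_le_orthogonal_self : rangeRadical B σ X ≤ B.orthogonal (rangeRadical B σ X) :=
  inf_le_right.trans (LinearMap.BilinForm.orthogonal_le inf_le_left)

lemma range_le_map₂_top (σ : V →ₗ[K] V →ₗ[K] W) (X : V) : range (σ X) ≤ map₂ σ ⊤ ⊤ := by
  rintro _ ⟨Z, rfl⟩
  exact apply_mem_map₂ σ mem_top mem_top

lemma rangeRadical_le_map₂_top : rangeRadical B σ X ≤ map₂ σ ⊤ ⊤ :=
  inf_le_left.trans (range_le_map₂_top σ X)

lemma map_le_orthogonal_rangeRadical (hB : B.IsRefl) (N : Submodule K V) :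
    N.map (σ Y) ≤ B.orthogonal (rangeRadical B σ Y) :=
  LinearMap.map_le_range.trans ((le_orthogonal_comm hB).1 inf_le_right)

lemma iInf_ker_eq_ker (hσ : ∀ X Y, σ X Y = σ Y X) : ⨅ X, ker (σ X) = ker σ := by
  ext n
  simp only [mem_iInf, LinearMap.mem_ker, hσ _ n, LinearMap.ext_iff, LinearMap.zero_apply]

lemma span_values_eq_map₂_top (σ : V →ₗ[K] V →ₗ[K] W) :
    span K {w | ∃ X Y, σ X Y = w} = map₂ σ ⊤ ⊤ := by
  simp only [map₂_eq_span_image2, Set.image2, top_coe, Set.mem_univ, true_and]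

lemma IsFlatSymm.apply_mem_orthogonal_range (hσ : IsFlatSymm B σ) {n : V} (hn : σ X n = 0)
    (Z : V) : σ n Z ∈ B.orthogonal (range (σ X)) := by
  rintro _ ⟨A, rfl⟩
  rw [hσ.symm X A, hσ.flat, hn, map_zero]

lemma exists_isMinimalRegularElement [FiniteDimensional K W] (B : LinearMap.BilinForm K W)
    (σ : V →ₗ[K] V →ₗ[K] W) : ∃ X, IsMinimalRegularElement B σ X :=
  exists_minimalFor_of_wellFoundedLT _ _ (isGeneric_isRegularElement σ).1

lemma finrank_rangeRadical_add_finrank_ker_lt [FiniteDimensional K V] [FiniteDimensional K W]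
    (hB : B.IsRefl) (hS : Disjoint (map₂ σ ⊤ ⊤) (B.orthogonal (map₂ σ ⊤ ⊤)))
    (hnull : finrank K (ker σ) + finrank K W < finrank K V) (X : V) :
    finrank K (rangeRadical B σ X) + finrank K (ker σ) < finrank K (ker (σ X)) := by
  have hrad : finrank K (rangeRadical B σ X) + finrank K (range (σ X)) ≤ finrank K W :=
    finrank_inf_orthogonal_add_finrank_le hB
      (hS.mono (range_le_map₂_top σ X) (LinearMap.BilinForm.orthogonal_le le_top))
  have hrank := (σ X).finrank_range_add_finrank_ker
  omega

section Infinite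

variable [Infinite K] [FiniteDimensional K W]

lemma IsFlatSymm.apply_mem_rangeRadical (hσ : IsFlatSymm B σ) (hX : IsRegularElement σ X) {n : V}
    (hn : σ X n = 0) (Z : V) : σ n Z ∈ rangeRadical B σ X :=
  ⟨hX.apply_mem_range hσ.symm hn Z, hσ.apply_mem_orthogonal_range hn Z⟩

lemma IsFlatSymm.map_ker_le_rangeRadical (hσ : IsFlatSymm B σ) (hX : IsRegularElement σ X)
    (Y : V) : (ker (σ X)).map (σ Y) ≤ rangeRadical B σ X := by
  rintro _ ⟨n, hn, rfl⟩
  rw [hσ.symm]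
  exact hσ.apply_mem_rangeRadical hX hn Y

lemma IsFlatSymm.map_ker_sup_rangeRadical_le_orthogonal_self (hσ : IsFlatSymm B σ)
    (hB : B.IsRefl) (hX : IsRegularElement σ X) (Y : V) :
    (ker (σ X)).map (σ Y) ⊔ rangeRadical B σ Y ≤
      B.orthogonal ((ker (σ X)).map (σ Y) ⊔ rangeRadical B σ Y) :=
  have hle := hσ.map_ker_le_rangeRadical hX Y
  sup_le_orthogonal_sup hB
    (hle.trans (rangeRadical_le_orthogonal_self.trans (LinearMap.BilinForm.orthogonal_le hle)))
    rangeRadical_le_orthogonal_self (map_le_orthogonal_rangeRadical hB _)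

end Infinite

variable [Infinite K] [NeZero (2 : K)] [FiniteDimensional K V]

lemma IsFlatSymm.finrank_le_finrank_ker_add (hσ : IsFlatSymm B σ) {U : Submodule K W}
    [FiniteDimensional K U] (hU : Disjoint U (B.orthogonal (map₂ σ ⊤ ⊤))) (hU2 : finrank K U ≤ 2)
    {N : Submodule K V} (hN : ∀ n ∈ N, ∀ Z, σ n Z ∈ U) :
    finrank K N ≤ finrank K (ker σ) + finrank K U := by
  obtain ⟨Y, hY⟩ := exists_inf_orthogonal_range_eq_bot hσ.symm hU hU2
  have hmap : N.map (σ Y) ≤ U := by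
    rintro _ ⟨n, hn, rfl⟩
    rw [hσ.symm]
    exact hN n hn Y
  have hker : N ⊓ ker (σ Y) ≤ ker σ := fun n ⟨hn, hnY⟩ => LinearMap.ext fun Z =>
    (mem_bot K).1 (hY ▸ ⟨hN n hn Z, hσ.apply_mem_orthogonal_range hnY Z⟩)
  calc finrank K N = finrank K (N.map (σ Y)) + finrank K (N ⊓ ker (σ Y) : Submodule K V) :=
        (finrank_map_add_finrank_inf_ker _ _).symm
    _ ≤ finrank K U + finrank K (ker σ) := add_le_add (finrank_mono hmap) (finrank_mono hker)
    _ = finrank K (ker σ) + finrank K U := add_comm _ _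

variable [FiniteDimensional K W]

lemma IsFlatSymm.finrank_ker_inf_ker_le (hσ : IsFlatSymm B σ)
    (hS : Disjoint (map₂ σ ⊤ ⊤) (B.orthogonal (map₂ σ ⊤ ⊤))) (hX : IsRegularElement σ X)
    (hXY : finrank K (rangeRadical B σ X ⊓ B.orthogonal (range (σ Y)) : Submodule K W) ≤ 2) :
    finrank K (ker (σ X) ⊓ ker (σ Y) : Submodule K V) ≤ finrank K (ker σ) +
      finrank K (rangeRadical B σ X ⊓ B.orthogonal (range (σ Y)) : Submodule K W) :=
  hσ.finrank_le_finrank_ker_add (hS.mono_left (inf_le_left.trans rangeRadical_le_map₂_top)) hXY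
    fun _ hn Z => ⟨hσ.apply_mem_rangeRadical hX hn.1 Z, hσ.apply_mem_orthogonal_range hn.2 Z⟩

lemma IsMinimalRegularElement.finrank_rangeRadical (hX : IsMinimalRegularElement B σ X)
    (hσ : IsFlatSymm B σ) (hB : B.IsRefl)
    (hS : Disjoint (map₂ σ ⊤ ⊤) (B.orthogonal (map₂ σ ⊤ ⊤)))
    (hnull : finrank K (ker σ) + finrank K W < finrank K V) (hY : IsRegularElement σ Y)
    (hXY : IsRegularElement (pairing B (rangeRadical B σ X) σ) Y)
    (hiso : finrank K ((ker (σ X)).map (σ Y) ⊔ rangeRadical B σ Y : Submodule K W) ≤ 5) :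
    finrank K (rangeRadical B σ X) = 3 ∧ finrank K ((ker (σ X)).map (σ Y)) = 3 ∧
      finrank K (rangeRadical B σ X ⊓ B.orthogonal (range (σ Y)) : Submodule K W) ≤ 1 := by
  set κ := finrank K (rangeRadical B σ X ⊓ B.orthogonal (range (σ Y)) : Submodule K W)
  have hmap := hσ.map_ker_le_rangeRadical hX.prop Y
  have hmap_le := finrank_mono hmap
  have hmap_gt : κ ≤ 2 →
      finrank K (rangeRadical B σ X) < finrank K ((ker (σ X)).map (σ Y)) + κ := fun hκ => by
    have hker := finrank_map_add_finrank_inf_ker (σ Y) (ker (σ X))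
    have hnull' := finrank_rangeRadical_add_finrank_ker_lt hB hS hnull X
    have hinf : _ ≤ finrank K (ker σ) + κ := hσ.finrank_ker_inf_ker_le hS hX.prop hκ
    omega
  have hcodim : finrank K (rangeRadical B σ X) ≤ κ + 2 := by
    have hmin : finrank K (rangeRadical B σ X) ≤ finrank K (rangeRadical B σ Y) := hX.le hY
    have hY₅ := (finrank_mono le_sup_right).trans hiso
    have hinf : finrank K ((ker (σ X)).map (σ Y) ⊓ rangeRadical B σ Y : Submodule K W) ≤ κ :=
      finrank_mono (inf_le_inf hmap inf_le_right)
    have hsup := finrank_sup_add_finrank_inf_eq ((ker (σ X)).map (σ Y)) (rangeRadical B σ Y)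
    omega
  have hchoose (c : ℕ) : finrank K (rangeRadical B σ X) ≤ κ + c →
      finrank K (rangeRadical B σ X) ≤ (c + 1).choose 2 :=
    finrank_le_choose_of_isRegularElement_pairing hσ.symm
      (hS.mono_left rangeRadical_le_map₂_top) hXY
  have hchoose₀ : finrank K (rangeRadical B σ X) ≤ κ → _ ≤ 0 := hchoose 0
  have hchoose₁ : finrank K (rangeRadical B σ X) ≤ κ + 1 → _ ≤ 1 := hchoose 1
  have hle₃ : finrank K (rangeRadical B σ X) ≤ 3 := hchoose 2 hcodim
  have hκ : κ ≤ finrank K (rangeRadical B σ X) := finrank_mono inf_le_left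
  -- `κ = 0` contradicts `hmap_gt` and `hmap_le`, while `hchoose₀` and `hchoose₁` force `κ = 0` when
  -- the codimension is at most `1`.
  omega

lemma IsMinimalRegularElement.rangeRadical_le_orthogonal (hX : IsMinimalRegularElement B σ X)
    (hσ : IsFlatSymm B σ) (hB : B.IsRefl)
    (hS : Disjoint (map₂ σ ⊤ ⊤) (B.orthogonal (map₂ σ ⊤ ⊤)))
    (hnull : finrank K (ker σ) + finrank K W < finrank K V) (hY : IsRegularElement σ Y)
    (hXY : IsRegularElement (pairing B (rangeRadical B σ X) σ) Y)
    (hiso : finrank K ((ker (σ X)).map (σ Y) ⊔ rangeRadical B σ Y : Submodule K W) ≤ 5) :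
    rangeRadical B σ X ≤ B.orthogonal (rangeRadical B σ Y) := by
  obtain ⟨hrad, hmap, -⟩ := hX.finrank_rangeRadical hσ hB hS hnull hY hXY hiso
  rw [← eq_of_le_of_finrank_eq (hσ.map_ker_le_rangeRadical hX.prop Y) (hmap.trans hrad.symm)]
  exact map_le_orthogonal_rangeRadical hB _

lemma IsMinimalRegularElement.finrank_sup_rangeRadical_and_isMinimal
    (hX : IsMinimalRegularElement B σ X) (hσ : IsFlatSymm B σ) (hB : B.IsRefl)
    (hS : Disjoint (map₂ σ ⊤ ⊤) (B.orthogonal (map₂ σ ⊤ ⊤)))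
    (hnull : finrank K (ker σ) + finrank K W < finrank K V) (hY : IsRegularElement σ Y)
    (hXY : IsRegularElement (pairing B (rangeRadical B σ X) σ) Y)
    (hiso : finrank K ((ker (σ X)).map (σ Y) ⊔ rangeRadical B σ Y : Submodule K W) ≤ 5)
    (hsup : finrank K (rangeRadical B σ X ⊔ rangeRadical B σ Y : Submodule K W) ≤ 5) :
    finrank K (rangeRadical B σ X ⊔ rangeRadical B σ Y : Submodule K W) = 5 ∧
      IsMinimalRegularElement B σ Y := by
  obtain ⟨hrad, -, hinf⟩ := hX.finrank_rangeRadical hσ hB hS hnull hY hXY hiso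
  have hinf₁ : finrank K (rangeRadical B σ X ⊓ rangeRadical B σ Y : Submodule K W) ≤ 1 :=
    (finrank_mono (inf_le_inf_left _ inf_le_right)).trans hinf
  have hsum := finrank_sup_add_finrank_inf_eq (rangeRadical B σ X) (rangeRadical B σ Y)
  have hXY_le : finrank K (rangeRadical B σ X) ≤ finrank K (rangeRadical B σ Y) := hX.le hY
  refine ⟨by omega, hY, fun Z hZ _ => ?_⟩
  have hXZ_le : finrank K (rangeRadical B σ X) ≤ finrank K (rangeRadical B σ Z) := hX.le hZ
  have hY₃ : finrank K (rangeRadical B σ Y) ≤ 3 := by omega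
  exact hY₃.trans (hrad.symm.trans_le hXZ_le)

end FlatBilinearMaps

section FormsOfType

variable {W : Type*} [AddCommGroup W] [Module ℝ W] {B : LinearMap.BilinForm ℝ W} {r t : ℕ}

lemma finrank_eq_of_hasType (h : BilinFormHasType B r t) : finrank ℝ W = r + t := by
  obtain ⟨b, -⟩ := h
  rw [finrank_eq_card_basis b, Fintype.card_sum, Fintype.card_fin, Fintype.card_fin]

lemma sigPos_toQuadraticMap_of_hasType (h : BilinFormHasType B r t) :
    sigPos B.toQuadraticMap = t := by
  obtain ⟨b, hortho, hneg, hpos⟩ := h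
  have hb : (QuadraticMap.associated (R := ℝ) B.toQuadraticMap).IsOrthoᵢ b := fun i j hij => by
    change QuadraticMap.associated (R := ℝ) B.toQuadraticMap (b i) (b j) = 0
    rw [QuadraticMap.associated_toQuadraticMap, hortho i j hij, hortho j i hij.symm, add_zero,
      smul_zero]
  have hequiv : QuadraticMap.Equivalent B.toQuadraticMap
      (QuadraticMap.weightedSumSquares ℝ fun i => B (b i) (b i)) :=
    QuadraticMap.basisRepr_eq_of_iIsOrtho B.toQuadraticMap b hb ▸
      ⟨B.toQuadraticMap.isometryEquivBasisRepr b⟩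
  have hset : {i | 0 < B (b i) (b i)} = Set.range Sum.inr := by
    ext (i | j)
    · simpa using (hneg i).le
    · simpa using hpos j
  rw [QuadraticForm.sigPos_of_equiv_weightedSumSquares hequiv, hset,
    Set.ncard_range_of_injective Sum.inr_injective, Nat.card_fin]

lemma finrank_le_of_hasType_of_le_orthogonal (h : BilinFormHasType B r t) {I : Submodule ℝ W}
    (hI : I ≤ B.orthogonal I) : finrank ℝ I ≤ r := by
  have := Module.Basis.finiteDimensional_of_finite h.choose
  have hnonpos : ∀ x ∈ I, B.toQuadraticMap x ≤ 0 := fun x hx => (hI hx x hx).le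
  have hle := QuadraticForm.sigPos_add_finrank_le_of_nonpos hnonpos
  rw [sigPos_toQuadraticMap_of_hasType h, finrank_eq_of_hasType h] at hle
  omega

end FormsOfType

end FlatBilinear

open FlatBilinear in
theorem statement1_general {K V W : Type*} [Field K] [Infinite K] [NeZero (2 : K)]
    [AddCommGroup V] [Module K V] [FiniteDimensional K V]
    [AddCommGroup W] [Module K W] [FiniteDimensional K W]
    {B : LinearMap.BilinForm K W} (hB : B.IsRefl)
    (hiso : ∀ I : Submodule K W, I ≤ B.orthogonal I → finrank K I ≤ 5)
    {σ : V →ₗ[K] V →ₗ[K] W} (hσ : IsFlatSymm B σ)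
    (hnull : finrank K (LinearMap.ker σ) + finrank K W < finrank K V) :
    map₂ σ ⊤ ⊤ ⊓ B.orthogonal (map₂ σ ⊤ ⊤) ≠ ⊥ := by
  intro hdeg
  have hS := disjoint_iff.2 hdeg
  have hiso₅ {X : V} (hX : IsRegularElement σ X) (Y : V) :=
    hiso _ (hσ.map_ker_sup_rangeRadical_le_orthogonal_self hB hX Y)
  have hgen (U : Submodule K W) : IsGeneric K (IsRegularElement (pairing B U σ)) :=
    isGeneric_isRegularElement _
  obtain ⟨X, hX⟩ := exists_isMinimalRegularElement B σ
  obtain ⟨⟨Y, hY, hXY⟩, -⟩ := (isGeneric_isRegularElement σ).and (hgen (rangeRadical B σ X))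
  set I := rangeRadical B σ X ⊔ rangeRadical B σ Y
  have hI : I ≤ B.orthogonal I := sup_le_orthogonal_sup hB rangeRadical_le_orthogonal_self
    rangeRadical_le_orthogonal_self
    (hX.rangeRadical_le_orthogonal hσ hB hS hnull hY hXY (hiso₅ hX.prop Y))
  obtain ⟨hI₅, hYmin⟩ : finrank K I = 5 ∧ IsMinimalRegularElement B σ Y :=
    hX.finrank_sup_rangeRadical_and_isMinimal hσ hB hS hnull hY hXY (hiso₅ hX.prop Y) (hiso I hI)
  obtain ⟨⟨Z, ⟨hZ, hIZ⟩, hXZ, hYZ⟩, -⟩ := ((isGeneric_isRegularElement σ).and (hgen I)).and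
    ((hgen (rangeRadical B σ X)).and (hgen (rangeRadical B σ Y)))
  have hI_orthogonal : I ≤ B.orthogonal (rangeRadical B σ Z) := sup_le
    (hX.rangeRadical_le_orthogonal hσ hB hS hnull hZ hXZ (hiso₅ hX.prop Z))
    (hYmin.rangeRadical_le_orthogonal hσ hB hS hnull hZ hYZ (hiso₅ hY Z))
  have hZI : rangeRadical B σ Z ≤ I := by
    have hsup := hiso _ (sup_le_orthogonal_sup hB hI rangeRadical_le_orthogonal_self hI_orthogonal)
    exact sup_eq_left.1 (eq_of_le_of_finrank_le le_sup_left (hsup.trans_eq hI₅.symm)).symm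
  have hI_inf : 3 ≤ finrank K (I ⊓ B.orthogonal (LinearMap.range (σ Z)) : Submodule K W) := by
    rw [← (hX.finrank_rangeRadical hσ hB hS hnull hZ hXZ (hiso₅ hX.prop Z)).1]
    exact (hX.le hZ).trans (finrank_mono (le_inf hZI inf_le_right))
  have hI_disjoint : Disjoint I (B.orthogonal (map₂ σ ⊤ ⊤)) :=
    hS.mono_left (sup_le rangeRadical_le_map₂_top rangeRadical_le_map₂_top)
  have hI_codim : finrank K I ≤
      finrank K (I ⊓ B.orthogonal (LinearMap.range (σ Z)) : Submodule K W) + 2 := by omega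
  have hI₃ : finrank K I ≤ 3 :=
    finrank_le_choose_of_isRegularElement_pairing hσ.symm hI_disjoint hIZ hI_codim
  omega

/-- Lemma 2.5. Let `V₁`, `W` be finite-dimensional real vector spaces with a
nondegenerate symmetric bilinear form of type `(r, t)`, `r ≤ 5`, on `W`. If `σ : V₁ × V₁ → W`
is a nonzero flat symmetric bilinear map whose nullity space satisfies
`dim N(σ) < dim V₁ - (r + t)`, then `S(σ)` is a degenerate subspace of `W`. -/
theorem statement1 {V₁ W : Type*} [AddCommGroup V₁] [Module ℝ V₁] [FiniteDimensional ℝ V₁]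
    [AddCommGroup W] [Module ℝ W] [FiniteDimensional ℝ W]
    (B : LinearMap.BilinForm ℝ W) (hBsymm : ∀ x y, B x y = B y x)
    (hBnd : B.Nondegenerate) (r t : ℕ) (hr : r ≤ 5) (htype : BilinFormHasType B r t)
    (σ : V₁ →ₗ[ℝ] V₁ →ₗ[ℝ] W) (hσsymm : ∀ X Y, σ X Y = σ Y X) (hσne : σ ≠ 0)
    (hflat : ∀ X Y Z U, B (σ X Y) (σ Z U) = B (σ X U) (σ Y Z))
    (hnull : finrank ℝ (⨅ X, LinearMap.ker (σ X) : Submodule ℝ V₁) + (r + t) < finrank ℝ V₁) :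
    (span ℝ {w | ∃ X Y, σ X Y = w}) ⊓ B.orthogonal (span ℝ {w | ∃ X Y, σ X Y = w}) ≠ ⊥ := by
  rw [FlatBilinear.iInf_ker_eq_ker hσsymm, ← FlatBilinear.finrank_eq_of_hasType htype] at hnull
  rw [FlatBilinear.span_values_eq_map₂_top]
  have hiso (I : Submodule ℝ W) (hI : I ≤ B.orthogonal I) : finrank ℝ I ≤ 5 :=
    (FlatBilinear.finrank_le_of_hasType_of_le_orthogonal htype hI).trans hr
  exact statement1_general (LinearMap.BilinForm.IsSymm.isRefl ⟨hBsymm⟩) hiso ⟨hσsymm, hflat⟩ hnull
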